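/- Let ℓ ≥ 3 and s ≥ 0 be integers. Then lim_{t→0⁺} F_{ℓ,s}(e^{−t}) · (t/(2π))^{ℓ²/2 − 1} · e^{π²(ℓ²−2ℓ)/(6t)} = 𝒞_ℓ, where 𝒞_ℓ := 2^{1−2ℓ}(ℓ−1)!/Γ((ℓ+1)/2)². In other words, F_{ℓ,s}(e^{−t}) ∼ 𝒞_ℓ (t/(2π))^{1−ℓ²/2} e^{−π²(ℓ²−2ℓ)/(6t)} as t → 0⁺. -/

import Mathlib

/-!
Write `q = e^{-t}`, `ζ = e^{2πiz}` and `θ(z) = (q;q)_∞ (ζ;q)_∞ (ζ⁻¹q;q)_∞`. Then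
`F_{ℓ,s}(q) = (q;q)_∞^{ℓ²+ℓ} ∫ ζ^{-s} θ(z)^{-ℓ} dz` (`Fls_eq`). Jacobi's triple product
(`triple_product`, obtained as the limit of Cauchy's finite identity) identifies `θ` with
Mathlib's `jacobiTheta₂` at `τ = it/(2π)`, up to a shift of the variable.

The integrand is holomorphic and 1-periodic in the strip `0 < Im z < t/(2π)`, so the contour can be
moved to the middle line `Im z = t/(4π)` (`integral_kernelG`). There the modular inversion
`τ ↦ -1/τ` makes `θ` an elementary factor times a rapidly convergent real series (`jacobiTheta_mid`),
whose two leading terms are `e^u + e^{-u}` in the variable `u = 2π² Re(z) / t`. By dominated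
convergence the rescaled integral tends to `∫ (e^u + e^{-u})^{-ℓ} du`
(`tendsto_integral_kernelK`), which is the Beta integral `Γ(ℓ/2)² / (2Γ(ℓ))`.

The modularity of Dedekind's `η` gives `(q;q)_∞ √(t/(2π)) e^{π²/(6t)} → 1`
(`tendsto_eulerE_zero`). The elementary factors in front of the rescaled integral are exactly those
normalising `(q;q)_∞^{ℓ²+ℓ}`, up to `1/π` (`elementary_factor`), so the limit is
`Γ(ℓ/2)² / (2πΓ(ℓ))`, which equals `𝒞_ℓ` by the duplication formula (`Cconst_eq`).
-/

open Complex Real Filter Topology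

/-- The q-Pochhammer symbol `(a;q)_∞ = ∏_{j=0}^∞ (1 - a q^j)`. -/
noncomputable def qPoch (a q : ℂ) : ℂ := ∏' j : ℕ, (1 - a * q ^ j)

/-- `F_{ℓ,s}(q)`, computed as the `s`-th Fourier coefficient (in `ζ = e^{2πi(x+iy)}`)
of `(q;q)_∞ / ((ζ;q)_∞^ℓ (ζ⁻¹q;q)_∞^ℓ)`, multiplied by `(q;q)_∞^{ℓ²-1}`,
using the horizontal contour at height `y`. -/
noncomputable def Fls (ℓ s : ℕ) (q : ℂ) (y : ℝ) : ℂ :=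
  qPoch q q ^ (ℓ ^ 2 - 1) *
    ∫ x in (0:ℝ)..1,
      qPoch q q /
          (qPoch (Complex.exp (2 * ↑π * I * (↑x + ↑y * I))) q ^ ℓ *
            qPoch (Complex.exp (-(2 * ↑π * I * (↑x + ↑y * I))) * q) q ^ ℓ) *
        Complex.exp (-(2 * ↑π * I * (s : ℂ) * (↑x + ↑y * I)))

/-- The constant `𝒞_ℓ = 2^{1-2ℓ} (ℓ-1)! / Γ((ℓ+1)/2)²`. -/
noncomputable def Cconst (ℓ : ℕ) : ℝ :=
  2 ^ (1 - 2 * (ℓ : ℤ)) * (Nat.factorial (ℓ - 1)) / Real.Gamma (((ℓ : ℝ) + 1) / 2) ^ 2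

/-! ### The Jacobi triple product -/

theorem multipliable_qPoch (a : ℂ) {q : ℂ} (hq : ‖q‖ < 1) :
    Multipliable fun j : ℕ => 1 - a * q ^ j := by
  have := multipliable_one_add_of_summable (f := fun j : ℕ => -(a * q ^ j)) (by
    simpa [norm_mul, norm_pow] using
      (summable_geometric_of_lt_one (norm_nonneg q) hq).mul_left ‖a‖)
  simpa [sub_eq_add_neg] using this

theorem qPoch_ne_zero {a q : ℂ} (ha : ‖a‖ < 1) (hq : ‖q‖ < 1) : qPoch a q ≠ 0 := by
  have := tprod_one_add_ne_zero_of_summable (f := fun j : ℕ => -(a * q ^ j)) (fun j h => by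
      have h1 : a * q ^ j = 1 := by linear_combination -h
      have h2 : ‖a * q ^ j‖ < 1 := by
        rw [norm_mul, norm_pow]
        exact mul_lt_one_of_nonneg_of_lt_one_left (norm_nonneg _) ha
          (pow_le_one₀ (norm_nonneg _) hq.le)
      rw [h1, norm_one] at h2
      exact lt_irrefl _ h2) (by
    simpa [norm_mul, norm_pow] using
      (summable_geometric_of_lt_one (norm_nonneg q) hq).mul_left ‖a‖)
  simpa [qPoch, sub_eq_add_neg] using this

/-- The partial product `(a;q)_n = ∏_{j<n} (1 - a q^j)`. -/
noncomputable def qPart (a q : ℂ) (n : ℕ) : ℂ := ∏ j ∈ Finset.range n, (1 - a * q ^ j)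

theorem tendsto_qPart (a : ℂ) {q : ℂ} (hq : ‖q‖ < 1) :
    Tendsto (qPart a q) atTop (𝓝 (qPoch a q)) :=
  (multipliable_qPoch a hq).hasProd.tendsto_prod_nat

theorem one_sub_pow_ne_zero {q : ℂ} (hq : ‖q‖ < 1) {m : ℕ} (hm : m ≠ 0) : 1 - q ^ m ≠ 0 := by
  intro h
  have h1 : ‖q ^ m‖ < 1 := by
    rw [norm_pow]; exact pow_lt_one₀ (norm_nonneg _) hq hm
  rw [← sub_eq_zero.mp h, norm_one] at h1
  exact lt_irrefl _ h1

theorem qPart_self_ne_zero {q : ℂ} (hq : ‖q‖ < 1) (n : ℕ) : qPart q q n ≠ 0 := by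
  refine Finset.prod_ne_zero_iff.mpr fun j _ => ?_
  rw [← pow_succ']
  exact one_sub_pow_ne_zero hq j.succ_ne_zero

/-- The reciprocal `1/(q;q)_m`, extended by zero to negative `m`, so that the recursion
`r(m) (1 - q^m) = r(m-1)` holds for every integer `m`. -/
noncomputable def recipQ (q : ℂ) (m : ℤ) : ℂ := if 0 ≤ m then (qPart q q m.toNat)⁻¹ else 0

theorem recipQ_rec {q : ℂ} (hq : ‖q‖ < 1) (m : ℤ) :
    recipQ q (m - 1) = recipQ q m * (1 - q ^ m) := by
  rcases lt_trichotomy m 0 with h | rfl | h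
  · simp [recipQ, h.not_ge, (show ¬ (1 ≤ m) by omega)]
  · simp [recipQ]
  · obtain ⟨k, rfl⟩ : ∃ k : ℕ, m = k + 1 := ⟨(m - 1).toNat, by omega⟩
    have h1 : recipQ q ((k : ℤ) + 1 - 1) = (qPart q q k)⁻¹ := by simp [recipQ]
    have h2 : recipQ q ((k : ℤ) + 1) = (qPart q q (k + 1))⁻¹ := by
      rw [recipQ, if_pos (by omega)]; rfl
    have h3 : qPart q q (k + 1) = qPart q q k * (1 - q ^ ((k : ℤ) + 1)) := by
      rw [qPart, Finset.prod_range_succ, ← qPart]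
      congr 2
      rw [← pow_succ']; norm_cast
    have h4 := qPart_self_ne_zero hq (k + 1)
    rw [h1, h2, h3]
    rw [h3] at h4
    have h5 := left_ne_zero_of_mul h4
    have h6 := right_ne_zero_of_mul h4
    field_simp

theorem tendsto_recipQ {q : ℂ} (hq : ‖q‖ < 1) :
    Tendsto (recipQ q) atTop (𝓝 (qPoch q q)⁻¹) := by
  have hto : Tendsto Int.toNat atTop atTop := tendsto_atTop.mpr fun b => by
    filter_upwards [eventually_ge_atTop (b : ℤ)] with m hm
    omega
  have h := ((tendsto_qPart q hq).inv₀ (qPoch_ne_zero hq hq)).comp hto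
  refine h.congr' ?_
  filter_upwards [eventually_ge_atTop 0] with m hm
  simp [recipQ, hm]

theorem exists_bound_recipQ {q : ℂ} (hq : ‖q‖ < 1) : ∃ C : ℝ, 0 ≤ C ∧ ∀ m, ‖recipQ q m‖ ≤ C := by
  obtain ⟨C, hC⟩ := (Metric.isBounded_range_of_tendsto _
    ((tendsto_qPart q hq).inv₀ (qPoch_ne_zero hq hq))).exists_norm_le
  have h0 : 0 ≤ C := (norm_nonneg _).trans (hC _ ⟨0, rfl⟩)
  refine ⟨C, h0, fun m => ?_⟩
  unfold recipQ
  split_ifs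
  · exact hC _ ⟨_, rfl⟩
  · simpa using h0

/-- Finite form of the triple product (Cauchy's `q`-binomial identity), by induction on `N`. -/
theorem hasSum_finite_triple {q ζ : ℂ} (hq : ‖q‖ < 1) (hq0 : q ≠ 0) (hζ : ζ ≠ 0)
    {T : ℤ → ℂ} (hT0 : T 0 = 1) (hT : ∀ n, T (n + 1) = -ζ * q ^ n * T n) (N : ℕ) :
    HasSum (fun n : ℤ => recipQ q (N - n) * recipQ q (N + n) * T n)
      (qPart ζ q N * qPart (ζ⁻¹ * q) q N / qPart q q (2 * N)) := by
  -- Multiplying the hypothesis for `N` by `(1 - ζ q^N) (1 - ζ⁻¹ q^(N+1))` gives `s1 + s2 + s3`,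
  -- where `s2`, `s3` shift `n` by one to absorb the factors `ζ`, `ζ⁻¹` into `T`.
  induction N with
  | zero =>
    have := hasSum_single (f := fun n : ℤ => recipQ q ((0 : ℕ) - n) * recipQ q ((0 : ℕ) + n) * T n)
      0 (fun n hn => by
        rcases lt_or_gt_of_ne hn with h | h
        · simp [recipQ, h.not_ge]
        · simp [recipQ, h.not_ge])
    simpa [recipQ, qPart, hT0] using this
  | succ N ih =>
    have e1 := one_sub_pow_ne_zero hq (m := 2 * N + 1) (by omega)
    have e2 := one_sub_pow_ne_zero hq (m := 2 * N + 2) (by omega)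
    have s1 := ih.mul_left (1 + q ^ (2 * N + 1))
    have s2 := ((Equiv.subRight (1 : ℤ)).hasSum_iff.mpr ih).mul_left (-ζ * q ^ N)
    have s3 := ((Equiv.addRight (1 : ℤ)).hasSum_iff.mpr ih).mul_left (-ζ⁻¹ * q ^ (N + 1))
    have s := ((s1.add s2).add s3).mul_right (((1 - q ^ (2 * N + 1)) * (1 - q ^ (2 * N + 2)))⁻¹)
    convert! s using 1
    · funext n
      simp only [Function.comp, Equiv.subRight_apply, Equiv.coe_addRight]
      rw [eq_mul_inv_iff_mul_eq₀ (mul_ne_zero e1 e2)]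
      have a0 := recipQ_rec hq ((N + 1 : ℕ) - n)
      have a1 := recipQ_rec hq ((N + 1 : ℕ) - n - 1)
      have b0 := recipQ_rec hq ((N + 1 : ℕ) + n)
      have b1 := recipQ_rec hq ((N + 1 : ℕ) + n - 1)
      rw [show (N : ℤ) - n = ((N + 1 : ℕ) : ℤ) - n - 1 by push_cast; ring,
        show (N : ℤ) + n = ((N + 1 : ℕ) : ℤ) + n - 1 by push_cast; ring,
        show (N : ℤ) - (n - 1) = ((N + 1 : ℕ) : ℤ) - n by push_cast; ring,
        show (N : ℤ) + (n - 1) = ((N + 1 : ℕ) : ℤ) + n - 1 - 1 by push_cast; ring,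
        show (N : ℤ) - (n + 1) = ((N + 1 : ℕ) : ℤ) - n - 1 - 1 by push_cast; ring,
        show (N : ℤ) + (n + 1) = ((N + 1 : ℕ) : ℤ) + n by push_cast; ring]
      rw [a1, b1, a0, b0]
      have t1 : -ζ * q ^ N * T (n - 1) = q ^ (((N + 1 : ℕ) : ℤ) - n) * T n := by
        have := hT (n - 1)
        rw [sub_add_cancel] at this
        rw [this, show ((N + 1 : ℕ) : ℤ) - n = N - (n - 1) by push_cast; ring, zpow_sub₀ hq0 N (n-1)]
        have := zpow_ne_zero (n - 1) hq0
        field_simp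
        rw [zpow_natCast]
        ring
      have t2 : -ζ⁻¹ * q ^ (N + 1) * T (n + 1) = q ^ (((N + 1 : ℕ) : ℤ) + n) * T n := by
        rw [hT n, zpow_add₀ hq0, zpow_natCast]
        field_simp
      have w1 : q ^ (((N + 1 : ℕ) : ℤ) - n - 1) = q ^ (((N + 1 : ℕ) : ℤ) - n) * q⁻¹ :=
        zpow_sub_one₀ hq0 _
      have w2 : q ^ (((N + 1 : ℕ) : ℤ) + n - 1) = q ^ (((N + 1 : ℕ) : ℤ) + n) * q⁻¹ :=
        zpow_sub_one₀ hq0 _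
      have w3 : q ^ (2 * N + 2) = q ^ (((N + 1 : ℕ) : ℤ) - n) * q ^ (((N + 1 : ℕ) : ℤ) + n) := by
        rw [← zpow_add₀ hq0, ← zpow_natCast]; congr 1; push_cast; ring
      have w4 : q ^ (2 * N + 1) =
          q ^ (((N + 1 : ℕ) : ℤ) - n) * q ^ (((N + 1 : ℕ) : ℤ) + n) * q⁻¹ := by
        rw [← w3]; field_simp; ring
      rw [w1, w2, w3, w4]
      set A := recipQ q (((N + 1 : ℕ) : ℤ) - n)
      set B := recipQ q (((N + 1 : ℕ) : ℤ) + n)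
      set u := q ^ (((N + 1 : ℕ) : ℤ) - n)
      set v := q ^ (((N + 1 : ℕ) : ℤ) + n)
      linear_combination (-A * B * (1 - v) * (1 - v * q⁻¹)) * t1
        + (-A * B * (1 - u) * (1 - u * q⁻¹)) * t2
    · have d : qPart q q (2 * (N + 1)) =
          qPart q q (2 * N) * ((1 - q ^ (2 * N + 1)) * (1 - q ^ (2 * N + 2))) := by
        rw [show 2 * (N + 1) = 2 * N + 1 + 1 by ring, qPart, Finset.prod_range_succ,
          Finset.prod_range_succ, ← qPart]
        ring
      have d1 : ∀ a, qPart a q (N + 1) = qPart a q N * (1 - a * q ^ N) := fun a => by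
        rw [qPart, Finset.prod_range_succ, ← qPart]
      rw [d, d1, d1]
      have h0 := qPart_self_ne_zero hq (2 * N)
      field_simp
      ring

/-- Jacobi's triple product identity: the finite form, in the limit `N → ∞`. -/
theorem triple_product {q ζ : ℂ} (hq : ‖q‖ < 1) (hq0 : q ≠ 0) (hζ : ζ ≠ 0)
    {T : ℤ → ℂ} (hT0 : T 0 = 1) (hT : ∀ n, T (n + 1) = -ζ * q ^ n * T n) (hs : Summable T) :
    qPoch q q * (qPoch ζ q * qPoch (ζ⁻¹ * q) q) = ∑' n, T n := by
  obtain ⟨C, hC0, hC⟩ := exists_bound_recipQ hq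
  have hQ := qPoch_ne_zero hq hq
  have lim1 : Tendsto (fun N : ℕ => ∑' n : ℤ, recipQ q (N - n) * recipQ q (N + n) * T n) atTop
      (𝓝 (∑' n : ℤ, (qPoch q q)⁻¹ * (qPoch q q)⁻¹ * T n)) := by
    refine tendsto_tsum_of_dominated_convergence (bound := fun n => C * C * ‖T n‖)
      (hs.norm.mul_left _) (fun n => ?_) (Eventually.of_forall fun N n => ?_)
    · refine Tendsto.mul_const _ (((tendsto_recipQ hq).comp ?_).mul ((tendsto_recipQ hq).comp ?_))
      · exact tendsto_atTop_add_const_right _ (-n) tendsto_natCast_atTop_atTop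
      · exact tendsto_atTop_add_const_right _ n tendsto_natCast_atTop_atTop
    · rw [norm_mul, norm_mul]
      gcongr <;> apply hC
  have lim2 : Tendsto (fun N : ℕ => qPart ζ q N * qPart (ζ⁻¹ * q) q N / qPart q q (2 * N)) atTop
      (𝓝 (qPoch ζ q * qPoch (ζ⁻¹ * q) q / qPoch q q)) :=
    ((tendsto_qPart _ hq).mul (tendsto_qPart _ hq)).div ((tendsto_qPart _ hq).comp
      (tendsto_id.const_mul_atTop' (by norm_num))) hQ
  have h := tendsto_nhds_unique lim2 (lim1.congr fun N =>
    (hasSum_finite_triple hq hq0 hζ hT0 hT N).tsum_eq)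
  rw [tsum_mul_left] at h
  field_simp at h
  linear_combination (norm := skip) h
  ring_nf

/-! ### Specialisation to `q = e^{-t}` -/

/-- The point `τ = it/(2π)` of the upper half-plane, for which `q = e^{2πiτ} = e^{-t}`. -/
noncomputable def tauOf (t : ℝ) : ℂ := ((t / (2 * π) : ℝ) : ℂ) * I

theorem tauOf_im (t : ℝ) : (tauOf t).im = t / (2 * π) := by
  rw [tauOf, im_ofReal_mul, I_im, mul_one]

theorem exp_tauOf (t : ℝ) : Complex.exp (2 * π * I * tauOf t) = Complex.exp (-(t : ℂ)) := by
  have hpi : (π : ℂ) ≠ 0 := by exact_mod_cast pi_ne_zero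
  congr 1
  rw [tauOf]
  push_cast
  field_simp
  rw [I_sq]
  ring

theorem norm_exp_neg_lt {t : ℝ} (ht : 0 < t) : ‖Complex.exp (-(t : ℂ))‖ < 1 := by
  rw [← ofReal_neg, Complex.norm_exp_ofReal]
  simpa using ht

/-- The triple product at `q = e^{-t}`, written with Mathlib's two-variable theta function. -/
theorem triple_eq_jacobiTheta {t : ℝ} (ht : 0 < t) (z : ℂ) :
    qPoch (Complex.exp (-(t : ℂ))) (Complex.exp (-(t : ℂ))) *
      (qPoch (Complex.exp (2 * π * I * z)) (Complex.exp (-(t : ℂ))) *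
        qPoch (Complex.exp (-(2 * π * I * z)) * Complex.exp (-(t : ℂ))) (Complex.exp (-(t : ℂ)))) =
      jacobiTheta₂ (z + 1 / 2 - tauOf t / 2) (tauOf t) := by
  rw [Complex.exp_neg (2 * π * I * z)]
  refine triple_product (T := fun n => jacobiTheta₂_term n (z + 1 / 2 - tauOf t / 2) (tauOf t))
    (norm_exp_neg_lt ht) (Complex.exp_ne_zero _)
    (Complex.exp_ne_zero _) ?_ (fun n => ?_) ?_
  · simp [jacobiTheta₂_term]
  · simp only [jacobiTheta₂_term]
    rw [← exp_tauOf, ← Complex.exp_int_mul, neg_mul, neg_mul, ← neg_one_mul, ← Complex.exp_pi_mul_I,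
      ← Complex.exp_add, ← Complex.exp_add, ← Complex.exp_add]
    congr 1
    push_cast
    ring
  · rw [summable_jacobiTheta₂_term_iff, tauOf_im]
    positivity

/-! ### Asymptotics of `(q;q)_∞` -/

/-- `(q;q)_∞` at `q = e^{-t}`. -/
noncomputable def eulerE (t : ℝ) : ℂ := qPoch (Complex.exp (-(t : ℂ))) (Complex.exp (-(t : ℂ)))

theorem eulerE_eq_tprod (t : ℝ) :
    eulerE t = ∏' n : ℕ, (1 - Complex.exp (-(t : ℂ)) ^ (n + 1)) := by
  simp [eulerE, qPoch, pow_succ']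

theorem eta_tauOf (t : ℝ) :
    ModularForm.eta (tauOf t) = Complex.exp (-(t / 24 : ℝ)) * eulerE t := by
  rw [ModularForm.eta, eulerE_eq_tprod]
  congr 1
  · rw [Function.Periodic.qParam]
    have hpi : (π : ℂ) ≠ 0 := by exact_mod_cast pi_ne_zero
    congr 1
    rw [tauOf]
    push_cast
    field_simp
    rw [I_sq]
    ring
  · congr 1
    funext n
    rw [ModularForm.eta_q_eq_pow, exp_tauOf]

/-- The transformation `η(-1/τ) = √(τ/i) η(τ)` at `τ = it/(2π)`. -/
theorem eulerE_modular {t : ℝ} (ht : 0 < t) :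
    eulerE t * ((√(t / (2 * π)) * Real.exp (π ^ 2 / (6 * t)) : ℝ) : ℂ) =
      Complex.exp ((t / 24 : ℝ)) * eulerE (4 * π ^ 2 / t) := by
  have hr : 0 < t / (2 * π) := by positivity
  have h := ModularForm.eta_comp_eq_csqrt_I_inv
    (show tauOf t ∈ UpperHalfPlane.upperHalfPlaneSet by
      show 0 < (tauOf t).im
      rw [tauOf_im]; exact hr)
  have hpi : (π : ℂ) ≠ 0 := by exact_mod_cast pi_ne_zero
  have htc : (t : ℂ) ≠ 0 := by exact_mod_cast ht.ne'
  have e1 : -1 / tauOf t = tauOf (4 * π ^ 2 / t) := by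
    rw [tauOf, tauOf]
    push_cast
    field_simp
    rw [I_sq]
    norm_num
  have e2 : Complex.sqrt (tauOf t) = √(t / (2 * π)) * Complex.sqrt I := by
    have hrc : ((t / (2 * π) : ℝ) : ℂ) ≠ 0 := by exact_mod_cast hr.ne'
    rw [Complex.sqrt, tauOf, Complex.sqrt, Complex.cpow_def_of_ne_zero (mul_ne_zero hrc I_ne_zero),
      Complex.cpow_def_of_ne_zero I_ne_zero, Complex.log_ofReal_mul hr I_ne_zero, add_mul,
      Complex.exp_add, Real.sqrt_eq_rpow, Real.rpow_def_of_pos hr]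
    congr 1
    push_cast
    norm_num
  have e3 : Complex.sqrt I ≠ 0 := by
    simp [Complex.sqrt]
  simp only [Function.comp, Pi.smul_apply, Pi.mul_apply, smul_eq_mul] at h
  rw [e1, eta_tauOf, eta_tauOf, e2] at h
  have h' : Complex.exp (-(4 * π ^ 2 / t / 24 : ℝ)) * eulerE (4 * π ^ 2 / t) =
      √(t / (2 * π)) * (Complex.exp (-(t / 24 : ℝ)) * eulerE t) := by
    rw [h]; field_simp
  have x1 : Complex.exp ((t / 24 : ℝ)) * Complex.exp (-(t / 24 : ℝ)) = 1 := by
    rw [← Complex.exp_add]; simp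
  have x2 : ((Real.exp (π ^ 2 / (6 * t)) : ℝ) : ℂ) * Complex.exp (-(4 * π ^ 2 / t / 24 : ℝ)) = 1 := by
    rw [Complex.ofReal_exp, ← Complex.exp_add, ← Complex.exp_zero]
    congr 1
    push_cast
    field_simp
    norm_num
  push_cast at *
  linear_combination (-Complex.exp (t / 24) * Complex.exp (π ^ 2 / (6 * t))) * h'
    - eulerE t * √(t / (2 * π)) * Complex.exp (π ^ 2 / (6 * t)) * x1
    + Complex.exp (t / 24) * eulerE (4 * π ^ 2 / t) * x2

theorem tendsto_eulerE_atTop : Tendsto eulerE atTop (𝓝 1) := by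
  have htprod : Tendsto (fun q : ℂ ↦ ∏' (n : ℕ), (1 - q ^ (n + 1))) (𝓝 0) (𝓝 1) := by
    have := tendsto_tprod_one_add_of_dominated_convergence (𝓕 := 𝓝 0) (g := 0)
      (f := fun (q : ℂ) (n : ℕ) ↦ -q ^ (n + 1)) (bound := fun n ↦ (1 / 2 : ℝ) ^ (n + 1))
    simp only [Pi.zero_apply, norm_neg, norm_pow, add_zero, tprod_one] at this
    simp_rw [sub_eq_add_neg]
    refine this
      (by simpa only [pow_succ'] using (summable_geometric_of_abs_lt_one (by norm_num)).mul_left _)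
      (fun k ↦ by simpa using ((continuous_pow (M := ℂ) (k + 1)).tendsto 0).neg) ?_
    filter_upwards [Metric.ball_mem_nhds (0 : ℂ) (by norm_num : (0 : ℝ) < 1 / 2)] with q hq k
    exact pow_le_pow_left₀ (norm_nonneg _) (mem_ball_zero_iff.mp hq).le _
  have h2 : Tendsto (fun t : ℝ => Complex.exp (-(t : ℂ))) atTop (𝓝 0) := by
    have := (Complex.continuous_ofReal.tendsto 0).comp
      (Real.tendsto_exp_atBot.comp tendsto_neg_atTop_atBot)
    simpa [Function.comp_def] using this
  refine (htprod.comp h2).congr fun t => ?_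
  simp [eulerE_eq_tprod]

/-- The asymptotics `(q;q)_∞ ∼ √(2π/t) e^{-π²/(6t)}`, from the modularity of `η`. -/
theorem tendsto_eulerE_zero :
    Tendsto (fun t : ℝ => eulerE t * ((√(t / (2 * π)) * Real.exp (π ^ 2 / (6 * t)) : ℝ) : ℂ))
      (𝓝[>] 0) (𝓝 1) := by
  have h1 : Tendsto (fun t : ℝ => Complex.exp ((t / 24 : ℝ))) (𝓝[>] 0) (𝓝 1) := by
    have : Continuous (fun t : ℝ => Complex.exp ((t / 24 : ℝ))) := by fun_prop
    simpa using (this.tendsto 0).mono_left nhdsWithin_le_nhds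
  have h2 : Tendsto (fun t : ℝ => 4 * π ^ 2 / t) (𝓝[>] 0) atTop := by
    simpa [div_eq_mul_inv] using tendsto_inv_nhdsGT_zero.const_mul_atTop
      (show (0:ℝ) < 4 * π ^ 2 by positivity)
  have h := h1.mul (tendsto_eulerE_atTop.comp h2)
  rw [one_mul] at h
  refine h.congr' ?_
  filter_upwards [self_mem_nhdsWithin] with t ht
  exact (eulerE_modular ht).symm

/-! ### Moving the contour -/

/-- Cauchy's theorem on a rectangle of width one: the vertical sides cancel by periodicity. -/
theorem integral_shift {f : ℂ → ℂ} {a b : ℝ} (hper : ∀ z, f (z + 1) = f z)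
    (hd : ∀ z : ℂ, z.im ∈ Set.uIcc a b → DifferentiableAt ℂ f z) :
    ∫ x in (0 : ℝ)..1, f (x + a * I) = ∫ x in (0 : ℝ)..1, f (x + b * I) := by
  have h := Complex.integral_boundary_rect_eq_zero_of_differentiableOn f (a * I) (1 + b * I)
    (fun z hz => (hd z (by simpa using hz.2)).differentiableWithinAt)
  have e : ∀ y : ℝ, f (1 + y * I) = f (y * I) := fun y => by rw [add_comm, hper]
  simp [e] at h
  exact sub_eq_zero.mp h

/-- The `s`-th Fourier integrand `ζ^{-s} / θ(ζ)^ℓ`, where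
`θ(ζ) = (q;q)_∞ (ζ;q)_∞ (ζ⁻¹q;q)_∞` is expressed as a two-variable theta function. -/
noncomputable def kernelG (ℓ s : ℕ) (t : ℝ) (z : ℂ) : ℂ :=
  Complex.exp (-(2 * π * I * s * z)) / jacobiTheta₂ (z + 1 / 2 - tauOf t / 2) (tauOf t) ^ ℓ

theorem eulerE_ne_zero {t : ℝ} (ht : 0 < t) : eulerE t ≠ 0 :=
  qPoch_ne_zero (norm_exp_neg_lt ht) (norm_exp_neg_lt ht)

theorem Fls_eq {t : ℝ} (ht : 0 < t) {ℓ : ℕ} (hℓ : 3 ≤ ℓ) (s : ℕ) (y : ℝ) :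
    Fls ℓ s (Complex.exp (-(t : ℂ))) y =
      eulerE t ^ (ℓ ^ 2 + ℓ) * ∫ x in (0 : ℝ)..1, kernelG ℓ s t (x + y * I) := by
  have hE := eulerE_ne_zero ht
  have h1 : ∀ x : ℝ, qPoch (Complex.exp (-(t : ℂ))) (Complex.exp (-(t : ℂ))) /
      (qPoch (Complex.exp (2 * ↑π * I * (↑x + ↑y * I))) (Complex.exp (-(t : ℂ))) ^ ℓ *
        qPoch (Complex.exp (-(2 * ↑π * I * (↑x + ↑y * I))) * (Complex.exp (-(t : ℂ))))
          (Complex.exp (-(t : ℂ))) ^ ℓ) *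
        Complex.exp (-(2 * ↑π * I * (s : ℂ) * (↑x + ↑y * I))) =
      eulerE t ^ (ℓ + 1) * kernelG ℓ s t (x + y * I) := fun x => by
    rw [kernelG, ← triple_eq_jacobiTheta ht, ← eulerE, mul_pow, mul_pow, pow_succ,
      div_mul_eq_mul_div, ← mul_div_assoc, mul_assoc (eulerE t ^ ℓ) (eulerE t),
      mul_div_mul_left _ _ (pow_ne_zero _ hE)]
  rw [Fls]
  simp_rw [h1]
  rw [intervalIntegral.integral_const_mul, ← eulerE, ← mul_assoc, ← pow_add]
  congr 2
  have : 1 ≤ ℓ ^ 2 := Nat.one_le_pow _ _ (by omega)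
  omega

theorem kernelG_add_one (ℓ s : ℕ) (t : ℝ) (z : ℂ) : kernelG ℓ s t (z + 1) = kernelG ℓ s t z := by
  rw [kernelG, kernelG, show z + 1 + 1 / 2 - tauOf t / 2 = z + 1 / 2 - tauOf t / 2 + 1 by ring,
    jacobiTheta₂_add_left]
  congr 1
  refine Complex.exp_eq_exp_iff_exists_int.mpr ⟨-s, ?_⟩
  push_cast
  ring

theorem differentiableAt_kernelG {t : ℝ} (ht : 0 < t) (ℓ s : ℕ) {z : ℂ} (h0 : 0 < z.im)
    (h1 : z.im < t / (2 * π)) : DifferentiableAt ℂ (kernelG ℓ s t) z := by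
  have hτ : 0 < (tauOf t).im := by rw [tauOf_im]; positivity
  have hq := norm_exp_neg_lt ht
  have n1 : ‖Complex.exp (2 * π * I * z)‖ < 1 := by
    rw [Complex.norm_exp, Real.exp_lt_one_iff]
    have : (2 * π * I * z).re = -(2 * π * z.im) := by simp
    rw [this]
    have := mul_pos two_pi_pos h0
    linarith
  have n2 : ‖Complex.exp (-(2 * π * I * z)) * Complex.exp (-(t : ℂ))‖ < 1 := by
    rw [← Complex.exp_add, Complex.norm_exp, Real.exp_lt_one_iff]
    have : (-(2 * π * I * z) + -(t : ℂ)).re = 2 * π * z.im - t := by simp; ring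
    rw [this]
    rw [lt_div_iff₀ two_pi_pos] at h1
    linarith
  have hne : jacobiTheta₂ (z + 1 / 2 - tauOf t / 2) (tauOf t) ≠ 0 := by
    rw [← triple_eq_jacobiTheta ht]
    exact mul_ne_zero (qPoch_ne_zero hq hq) (mul_ne_zero (qPoch_ne_zero n1 hq) (qPoch_ne_zero n2 hq))
  have d : DifferentiableAt ℂ (fun z => jacobiTheta₂ (z + 1 / 2 - tauOf t / 2) (tauOf t)) z :=
    (differentiableAt_jacobiTheta₂_fst (z + 1 / 2 - tauOf t / 2) hτ).comp z
      (f := fun z => z + 1 / 2 - tauOf t / 2) (by fun_prop)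
  exact DifferentiableAt.div (by fun_prop) (d.pow ℓ) (pow_ne_zero _ hne)

/-- The contour may be moved to the middle of the strip, where `θ` is real and positive. -/
theorem integral_kernelG {t : ℝ} (ht : 0 < t) (ℓ s : ℕ) {y : ℝ} (h0 : 0 < y)
    (h1 : y < t / (2 * π)) :
    ∫ x in (0 : ℝ)..1, kernelG ℓ s t (x + y * I) =
      ∫ x in (-(1 / 2) : ℝ)..(1 / 2), kernelG ℓ s t (x + (t / (4 * π) : ℝ) * I) := by
  have hm0 : 0 < t / (4 * π) := by positivity
  have hm1 : t / (4 * π) < t / (2 * π) := by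
    apply div_lt_div_of_pos_left ht two_pi_pos
    linarith [pi_pos]
  rw [integral_shift (b := t / (4 * π)) (kernelG_add_one ℓ s t) fun z hz => ?_]
  · have hp : Function.Periodic
        (fun x : ℝ => kernelG ℓ s t (x + (t / (4 * π) : ℝ) * I)) 1 := fun x => by
      have := kernelG_add_one ℓ s t (x + (t / (4 * π) : ℝ) * I)
      refine Eq.trans ?_ this
      show kernelG _ _ _ _ = kernelG _ _ _ _
      congr 1
      push_cast
      ring
    have := hp.intervalIntegral_add_eq 0 (-(1 / 2))
    norm_num at this ⊢
    exact this
  · rw [Set.mem_uIcc] at hz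
    refine differentiableAt_kernelG ht ℓ s ?_ ?_ <;> rcases hz with h | h <;> linarith [h.1, h.2]

/-! ### Modular inversion on the middle line -/

/-- The rescaled theta series after modular inversion, with terms
`exp(-2π²n(n-1)/t + (2n-1)u)`; the terms `n = 0, 1` give `2 cosh u`. -/
noncomputable def thetaD (t u : ℝ) : ℝ :=
  ∑' n : ℤ, Real.exp (-(2 * π ^ 2 / t) * (n * (n - 1)) + (2 * n - 1) * u)

theorem summable_thetaD {t : ℝ} (ht : 0 < t) (u : ℝ) :
    Summable fun n : ℤ => Real.exp (-(2 * π ^ 2 / t) * (n * (n - 1)) + (2 * n - 1) * u) := by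
  have h := ((summable_jacobiTheta₂_term_iff
    ((-(u / π + π / t) : ℝ) * I) ((2 * π / t : ℝ) * I)).mpr (by
      rw [im_ofReal_mul, I_im]; positivity)).norm.mul_left (Real.exp (-u))
  refine h.congr fun n => ?_
  rw [norm_jacobiTheta₂_term, ← Real.exp_add, im_ofReal_mul, im_ofReal_mul, I_im]
  congr 1
  field_simp
  ring

/-- Modular inversion of `θ` on the middle line. -/
theorem jacobiTheta_mid {t : ℝ} (ht : 0 < t) (x : ℝ) :
    jacobiTheta₂ (x + 1 / 2) (tauOf t) =
      (((√(t / (2 * π)))⁻¹ * Real.exp (-(π ^ 2 / (2 * t))) * Real.exp (-(2 * π ^ 2 * x ^ 2 / t)) *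
        thetaD t (2 * π ^ 2 / t * x) : ℝ) : ℂ) := by
  have hr : 0 < t / (2 * π) := by positivity
  have hpi : (π : ℂ) ≠ 0 := by exact_mod_cast pi_ne_zero
  have htc : (t : ℂ) ≠ 0 := by exact_mod_cast ht.ne'
  rw [jacobiTheta₂_functional_equation]
  have e1 : 1 / (-I * tauOf t) ^ (1 / 2 : ℂ) = (((√(t / (2 * π)))⁻¹ : ℝ) : ℂ) := by
    rw [show -I * tauOf t = ((t / (2 * π) : ℝ) : ℂ) by
      rw [tauOf]; linear_combination (-((t / (2 * π) : ℝ) : ℂ)) * I_sq, Real.sqrt_eq_rpow,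
      Complex.ofReal_inv, Complex.ofReal_cpow hr.le]
    push_cast
    rw [one_div]
  have e2 : cexp (-π * I * (x + 1 / 2) ^ 2 / tauOf t) =
      ((Real.exp (-(π ^ 2 / (2 * t))) * Real.exp (-(2 * π ^ 2 * x ^ 2 / t)) *
        Real.exp (-(2 * π ^ 2 / t * x)) : ℝ) : ℂ) := by
    rw [← Real.exp_add, ← Real.exp_add, Complex.ofReal_exp]
    congr 1
    rw [tauOf]
    push_cast
    field_simp
    ring
  have e3 : jacobiTheta₂ ((x + 1 / 2) / tauOf t) (-1 / tauOf t) =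
      ((Real.exp (2 * π ^ 2 / t * x) * thetaD t (2 * π ^ 2 / t * x) : ℝ) : ℂ) := by
    rw [thetaD, ← tsum_mul_left, Complex.ofReal_tsum, jacobiTheta₂]
    congr 1
    funext n
    rw [jacobiTheta₂_term, ← Real.exp_add, Complex.ofReal_exp]
    congr 1
    rw [tauOf]
    push_cast
    field_simp
    ring
  rw [e1, e2, e3, ← Complex.ofReal_mul, ← Complex.ofReal_mul]
  congr 1
  have : Real.exp (-(2 * π ^ 2 / t * x)) * Real.exp (2 * π ^ 2 / t * x) = 1 := by
    rw [← Real.exp_add]; simp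
  linear_combination ((√(t / (2 * π)))⁻¹ * Real.exp (-(π ^ 2 / (2 * t))) *
    Real.exp (-(2 * π ^ 2 * x ^ 2 / t)) * thetaD t (2 * π ^ 2 / t * x)) * this

/-- The rescaled integrand, in the variable `u = 2π²x/t`. -/
noncomputable def kernelK (ℓ s : ℕ) (t u : ℝ) : ℂ :=
  Complex.exp (-(2 * π * I * s * ((t * u / (2 * π ^ 2) : ℝ) + (t / (4 * π) : ℝ) * I))) *
    ((Real.exp (ℓ * (t * u ^ 2 / (2 * π ^ 2))) / thetaD t u ^ ℓ : ℝ) : ℂ)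

/-- The integral over the middle line after modular inversion and the substitution
`u = 2π²x/t`. -/
theorem integral_mid {t : ℝ} (ht : 0 < t) (ℓ s : ℕ) :
    ∫ x in (-(1 / 2) : ℝ)..(1 / 2), kernelG ℓ s t (x + (t / (4 * π) : ℝ) * I) =
      ((√(t / (2 * π)) ^ ℓ * Real.exp (π ^ 2 / (2 * t)) ^ ℓ * (t / (2 * π ^ 2)) : ℝ) : ℂ) *
        ∫ u in (-(π ^ 2 / t))..(π ^ 2 / t), kernelK ℓ s t u := by
  have hpi := pi_pos
  have hr : 0 < t / (2 * π) := by positivity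
  have hc : 2 * π ^ 2 / t ≠ 0 := by positivity
  have h1 : ∀ x : ℝ, kernelG ℓ s t (x + (t / (4 * π) : ℝ) * I) =
      ((√(t / (2 * π)) ^ ℓ * Real.exp (π ^ 2 / (2 * t)) ^ ℓ : ℝ) : ℂ) *
        kernelK ℓ s t (2 * π ^ 2 / t * x) := fun x => by
    rw [kernelG, kernelK, show (x : ℂ) + (t / (4 * π) : ℝ) * I + 1 / 2 - tauOf t / 2 = x + 1 / 2 by
      rw [tauOf]; push_cast; ring, jacobiTheta_mid ht,
      show t * (2 * π ^ 2 / t * x) / (2 * π ^ 2) = x by field_simp,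
      show t * (2 * π ^ 2 / t * x) ^ 2 / (2 * π ^ 2) = 2 * π ^ 2 * x ^ 2 / t by field_simp,
      mul_left_comm, div_eq_mul_inv, ← Complex.ofReal_pow, ← Complex.ofReal_inv,
      ← Complex.ofReal_mul]
    congr 2
    rw [Real.exp_neg, Real.exp_neg, mul_pow, mul_pow, mul_pow, Real.exp_nat_mul]
    simp only [mul_inv, inv_pow, inv_inv]
    rw [div_eq_mul_inv]
    ring
  simp_rw [h1]
  rw [intervalIntegral.integral_const_mul, intervalIntegral.integral_comp_mul_left _ hc,
    Complex.real_smul, ← mul_assoc, ← Complex.ofReal_mul]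
  congr 2
  · rw [inv_div]
  · ring
  · ring

/-! ### The Beta integral and the constant -/

/-- The substitution `x = 1 / (1 + e^(-2u))` turns this into the Beta integral `B(ℓ/2, ℓ/2)`. -/
theorem integral_cosh_pow {ℓ : ℕ} (hℓ : 0 < ℓ) :
    ∫ u : ℝ, ((Real.exp u + Real.exp (-u)) ^ ℓ)⁻¹ =
      Real.Gamma (ℓ / 2) ^ 2 / (2 * Real.Gamma ℓ) := by
  have hl : (0 : ℝ) < ℓ := by exact_mod_cast hℓ
  have h2l : (0 : ℝ) < (ℓ : ℝ) / 2 := by positivity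
  have hB : ∫ x in Set.Ioo (0 : ℝ) 1, x ^ ((ℓ : ℝ) / 2 - 1) * (1 - x) ^ ((ℓ : ℝ) / 2 - 1) =
      Real.Gamma (ℓ / 2) ^ 2 / Real.Gamma ℓ := by
    have h := Complex.betaIntegral_eq_Gamma_mul_div (((ℓ : ℝ) / 2 : ℝ) : ℂ) (((ℓ : ℝ) / 2 : ℝ) : ℂ)
      (by rwa [Complex.ofReal_re]) (by rwa [Complex.ofReal_re])
    rw [← Complex.ofReal_add, add_halves, Complex.Gamma_ofReal, Complex.Gamma_ofReal,
      ← Complex.ofReal_mul, ← Complex.ofReal_div, Complex.betaIntegral,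
      intervalIntegral.integral_of_le zero_le_one, MeasureTheory.integral_Ioc_eq_integral_Ioo] at h
    rw [← sq] at h
    rw [← Complex.ofReal_inj, ← h, ← integral_complex_ofReal]
    refine MeasureTheory.setIntegral_congr_fun measurableSet_Ioo fun x hx => ?_
    have h1 : (0 : ℝ) ≤ 1 - x := by linarith [hx.2]
    simp only [Complex.ofReal_mul, Complex.ofReal_cpow hx.1.le, Complex.ofReal_cpow h1]
    push_cast
    rfl
  have himg : (fun u : ℝ => Real.sigmoid (2 * u)) '' Set.univ = Set.Ioo 0 1 := by
    rw [Set.image_univ, ← Real.range_sigmoid]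
    exact (mul_left_surjective₀ (two_ne_zero' ℝ)).range_comp Real.sigmoid
  have hinj : Set.InjOn (fun u : ℝ => Real.sigmoid (2 * u)) Set.univ := fun a _ b _ hab => by
    have := Real.sigmoid_injective hab
    linarith
  have hcv := MeasureTheory.integral_image_eq_integral_abs_deriv_smul MeasurableSet.univ
    (f := fun u : ℝ => Real.sigmoid (2 * u))
    (f' := fun u : ℝ => Real.sigmoid (2 * u) * (1 - Real.sigmoid (2 * u)) * 2)
    (fun u _ => ((Real.hasDerivAt_sigmoid (2 * u)).comp u
      (by simpa using (hasDerivAt_id u).const_mul (2 : ℝ))).hasDerivWithinAt) hinj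
    (fun x => x ^ ((ℓ : ℝ) / 2 - 1) * (1 - x) ^ ((ℓ : ℝ) / 2 - 1))
  rw [himg, hB, MeasureTheory.setIntegral_univ] at hcv
  have hpt : ∀ u : ℝ, |Real.sigmoid (2 * u) * (1 - Real.sigmoid (2 * u)) * 2| •
      (Real.sigmoid (2 * u) ^ ((ℓ : ℝ) / 2 - 1) * (1 - Real.sigmoid (2 * u)) ^ ((ℓ : ℝ) / 2 - 1)) =
      2 * ((Real.exp u + Real.exp (-u)) ^ ℓ)⁻¹ := fun u => by
    have p0 : 0 < Real.sigmoid (2 * u) := Real.sigmoid_pos _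
    have p1 : 0 < 1 - Real.sigmoid (2 * u) := by linarith [Real.sigmoid_lt_one (2 * u)]
    have hpos : 0 < Real.exp u + Real.exp (-u) := by positivity
    have hprod : Real.sigmoid (2 * u) * (1 - Real.sigmoid (2 * u)) =
        (Real.exp u + Real.exp (-u)) ^ (-2 : ℝ) := by
      rw [Real.sigmoid_def, show -(2 * u) = -u + -u by ring, Real.exp_add,
        Real.rpow_neg hpos.le, Real.rpow_two, Real.exp_neg]
      have := Real.exp_pos u
      field_simp
      ring
    rw [abs_of_pos (by positivity), smul_eq_mul, ← Real.mul_rpow p0.le p1.le, mul_right_comm,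
      ← Real.rpow_one_add' (mul_pos p0 p1).le (by linarith), hprod, ← Real.rpow_mul hpos.le,
      show (-2 : ℝ) * (1 + (ℓ / 2 - 1)) = -ℓ by ring, Real.rpow_neg hpos.le, Real.rpow_natCast,
      mul_comm]
  simp_rw [hpt] at hcv
  rw [MeasureTheory.integral_const_mul] at hcv
  rw [mul_comm 2, ← div_div, hcv]
  ring

/-- The duplication formula for `Γ` at `ℓ/2`. -/
theorem Cconst_eq {ℓ : ℕ} (hℓ : 0 < ℓ) :
    Real.Gamma (ℓ / 2) ^ 2 / (2 * Real.Gamma ℓ) / π = Cconst ℓ := by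
  have hl : (0 : ℝ) < ℓ := by exact_mod_cast hℓ
  have h := Real.Gamma_mul_Gamma_add_half ((ℓ : ℝ) / 2)
  rw [show 2 * ((ℓ : ℝ) / 2) = ℓ by ring, ← add_div] at h
  have hf : ((ℓ - 1).factorial : ℝ) = Real.Gamma ℓ := by
    rw [← Real.Gamma_nat_eq_factorial]
    congr 1
    exact_mod_cast Nat.sub_add_cancel hℓ
  have g1 : 0 < Real.Gamma ℓ := Real.Gamma_pos_of_pos hl
  have g2 : 0 < Real.Gamma (((ℓ : ℝ) + 1) / 2) := Real.Gamma_pos_of_pos (by positivity)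
  have hpow : (2 : ℝ) ^ (1 - 2 * (ℓ : ℤ)) * 2 = ((2 : ℝ) ^ (1 - (ℓ : ℝ))) ^ 2 := by
    rw [← Real.rpow_intCast, ← Real.rpow_natCast, ← Real.rpow_mul zero_le_two,
      ← Real.rpow_add_one two_ne_zero]
    congr 1
    push_cast
    ring
  have hs : √π ^ 2 = π := Real.sq_sqrt pi_pos.le
  have hp := pi_pos
  rw [Cconst, hf]
  field_simp
  have h2 : (Real.Gamma (ℓ / 2) * Real.Gamma (((ℓ : ℝ) + 1) / 2)) ^ 2 =
      (Real.Gamma ℓ * 2 ^ (1 - (ℓ : ℝ)) * √π) ^ 2 := by rw [h]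
  rw [mul_pow, mul_pow, mul_pow, hs, ← hpow] at h2
  linear_combination h2

/-! ### Dominated convergence -/

theorem exp_add_le_thetaD {t : ℝ} (ht : 0 < t) (u : ℝ) :
    Real.exp u + Real.exp (-u) ≤ thetaD t u := by
  have h := (summable_thetaD ht u).sum_le_tsum {(1 : ℤ), 0} fun _ _ => (Real.exp_pos _).le
  rw [Finset.sum_pair one_ne_zero] at h
  convert! h using 3 <;> norm_num

theorem exp_abs_le_thetaD {t : ℝ} (ht : 0 < t) (u : ℝ) : Real.exp |u| ≤ thetaD t u := by
  refine le_trans ?_ (exp_add_le_thetaD ht u)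
  rcases abs_cases u with h | h <;> rw [h.1] <;> linarith [Real.exp_pos u, Real.exp_pos (-u)]

theorem tendsto_thetaD (u : ℝ) :
    Tendsto (fun t => thetaD t u) (𝓝[>] 0) (𝓝 (Real.exp u + Real.exp (-u))) := by
  have hlim : Real.exp u + Real.exp (-u) =
      ∑' n : ℤ, if n ∈ ({1, 0} : Finset ℤ) then Real.exp ((2 * n - 1) * u) else 0 := by
    rw [tsum_eq_sum (s := {1, 0}) (fun n hn => if_neg hn), Finset.sum_pair one_ne_zero]
    norm_num
  rw [hlim]
  have hn : ∀ n : ℤ, (0 : ℝ) ≤ n * (n - 1) := fun n => by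
    have : 0 ≤ n * (n - 1) := by
      rcases le_or_gt n 0 with h | h
      · exact mul_nonneg_of_nonpos_of_nonpos h (by omega)
      · exact mul_nonneg h.le (by omega)
    exact_mod_cast this
  -- the terms increase with `t`, so those at `t = 1` dominate
  refine tendsto_tsum_of_dominated_convergence (summable_thetaD one_pos u) (fun n => ?_) ?_
  · split_ifs with h
    · have h0 : (n : ℝ) * (n - 1) = 0 := by
        simp only [Finset.mem_insert, Finset.mem_singleton] at h
        rcases h with rfl | rfl <;> norm_num
      simp [h0]
    · have h0 : (0 : ℝ) < n * (n - 1) := by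
        refine (hn n).lt_of_ne' ?_
        simp only [Finset.mem_insert, Finset.mem_singleton, not_or] at h
        refine mul_ne_zero (by exact_mod_cast h.2) (sub_ne_zero.mpr (by exact_mod_cast h.1))
      refine Real.tendsto_exp_atBot.comp (tendsto_atBot_add_const_right _ _ ?_)
      have hc : 0 < 2 * π ^ 2 * (n * (n - 1)) := by positivity
      refine (tendsto_neg_atTop_atBot.comp
        (tendsto_inv_nhdsGT_zero.const_mul_atTop hc)).congr fun t => ?_
      simp only [Function.comp]
      ring
  · filter_upwards [Ioc_mem_nhdsGT one_pos] with t ht n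
    rw [Real.norm_of_nonneg (Real.exp_pos _).le, Real.exp_le_exp]
    have : 2 * π ^ 2 / 1 ≤ 2 * π ^ 2 / t := div_le_div_of_nonneg_left (by positivity) ht.1 ht.2
    have := mul_le_mul_of_nonneg_right this (hn n)
    linarith

theorem measurable_thetaD (t : ℝ) : Measurable (thetaD t) := by
  have h : thetaD t = fun u => (∑' n : ℤ, ENNReal.ofReal
      (Real.exp (-(2 * π ^ 2 / t) * (n * (n - 1)) + (2 * n - 1) * u))).toReal := funext fun u => by
    rw [ENNReal.tsum_toReal_eq fun _ => ENNReal.ofReal_ne_top, thetaD]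
    simp only [ENNReal.toReal_ofReal (Real.exp_pos _).le]
  rw [h]
  exact (Measurable.tsum fun n => by fun_prop).ennreal_toReal

theorem measurable_kernelK (ℓ s : ℕ) (t : ℝ) : Measurable (kernelK ℓ s t) := by
  have := measurable_thetaD t
  unfold kernelK
  fun_prop

theorem tendsto_kernelK (ℓ s : ℕ) (u : ℝ) :
    Tendsto (fun t => kernelK ℓ s t u) (𝓝[>] 0)
      (𝓝 ((((Real.exp u + Real.exp (-u)) ^ ℓ)⁻¹ : ℝ) : ℂ)) := by
  have h1 : Tendsto (fun t : ℝ => Complex.exp (-(2 * π * I * s *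
      ((t * u / (2 * π ^ 2) : ℝ) + (t / (4 * π) : ℝ) * I)))) (𝓝[>] 0) (𝓝 1) := by
    have : Continuous fun t : ℝ => Complex.exp (-(2 * π * I * s *
      ((t * u / (2 * π ^ 2) : ℝ) + (t / (4 * π) : ℝ) * I))) := by fun_prop
    simpa using (this.tendsto 0).mono_left nhdsWithin_le_nhds
  have h2 : Tendsto (fun t : ℝ => Real.exp (ℓ * (t * u ^ 2 / (2 * π ^ 2)))) (𝓝[>] 0) (𝓝 1) := by
    have : Continuous fun t : ℝ => Real.exp (ℓ * (t * u ^ 2 / (2 * π ^ 2))) := by fun_prop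
    simpa using (this.tendsto 0).mono_left nhdsWithin_le_nhds
  have h3 := h2.div ((tendsto_thetaD u).pow ℓ) (by positivity)
  have h := h1.mul ((Complex.continuous_ofReal.tendsto _).comp h3)
  rw [one_mul, one_div] at h
  exact h

/-- The dominating function. On `|u| ≤ π²/t` the Gaussian factor is at most `e^(ℓ|u|/2)`, while
`thetaD t u ^ ℓ ≥ e^(ℓ|u|)`; the remaining `e^(-ℓ|u|/2)` is at most `2 / (1 + u²)`. -/
theorem norm_kernelK_le {ℓ : ℕ} (hℓ : 2 ≤ ℓ) (s : ℕ) {t : ℝ} (ht : 0 < t) (ht1 : t ≤ 1) {u : ℝ}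
    (hu : |u| ≤ π ^ 2 / t) : ‖kernelK ℓ s t u‖ ≤ Real.exp s * (2 * (1 + u ^ 2)⁻¹) := by
  have hl : (2 : ℝ) ≤ ℓ := by exact_mod_cast hℓ
  rw [kernelK, norm_mul, Complex.norm_exp, Complex.norm_real]
  have hθ := exp_abs_le_thetaD ht u
  have hpos : 0 < thetaD t u := (Real.exp_pos _).trans_le hθ
  gcongr
  · have : (-(2 * π * I * s * (((t * u / (2 * π ^ 2) : ℝ) : ℂ) + (t / (4 * π) : ℝ) * I))).re =
        s * t / 2 := by
      have : (-(2 * π * I * s * (((t * u / (2 * π ^ 2) : ℝ) : ℂ) + (t / (4 * π) : ℝ) * I))) =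
          ((s * t / 2 : ℝ) : ℂ) + ((-(s * t * u / π) : ℝ) : ℂ) * I := by
        have hpi : (π : ℂ) ≠ 0 := by exact_mod_cast pi_ne_zero
        push_cast
        field_simp
        linear_combination (-(4 * s * t * π : ℂ)) * I_sq
      rw [this]
      simp
    rw [this]
    have : (s : ℝ) * t ≤ s * 1 := by gcongr
    have := s.cast_nonneg (α := ℝ)
    linarith
  · rw [Real.norm_of_nonneg (by positivity)]
    have h1 : (ℓ : ℝ) * (t * u ^ 2 / (2 * π ^ 2)) ≤ ℓ * (|u| / 2) := by
      refine mul_le_mul_of_nonneg_left ?_ (by positivity)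
      rw [le_div_iff₀ ht] at hu
      rw [div_le_div_iff₀ (by positivity) two_pos, ← sq_abs]
      nlinarith [abs_nonneg u]
    calc Real.exp (ℓ * (t * u ^ 2 / (2 * π ^ 2))) / thetaD t u ^ ℓ
        ≤ Real.exp (ℓ * (|u| / 2)) / Real.exp |u| ^ ℓ := by gcongr
      _ = (Real.exp (ℓ * (|u| / 2)))⁻¹ := by
        rw [← Real.exp_nat_mul, ← Real.exp_sub, ← Real.exp_neg]
        congr 1
        ring
      _ ≤ ((1 + u ^ 2) / 2)⁻¹ := by
        gcongr
        have h2 : Real.exp |u| ≤ Real.exp (ℓ * (|u| / 2)) := by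
          rw [Real.exp_le_exp]
          nlinarith [abs_nonneg u]
        have h3 := Real.quadratic_le_exp_of_nonneg (abs_nonneg u)
        rw [sq_abs] at h3
        linarith [abs_nonneg u]
      _ = 2 * (1 + u ^ 2)⁻¹ := by rw [inv_div, div_eq_mul_inv]

theorem tendsto_integral_kernelK {ℓ : ℕ} (hℓ : 2 ≤ ℓ) (s : ℕ) :
    Tendsto (fun t : ℝ => ∫ u in (-(π ^ 2 / t))..(π ^ 2 / t), kernelK ℓ s t u) (𝓝[>] 0)
      (𝓝 ((Real.Gamma (ℓ / 2) ^ 2 / (2 * Real.Gamma ℓ) : ℝ) : ℂ)) := by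
  rw [← integral_cosh_pow (by omega : 0 < ℓ), ← integral_complex_ofReal]
  have key : Tendsto (fun t : ℝ => ∫ u : ℝ,
      (Set.Ioc (-(π ^ 2 / t)) (π ^ 2 / t)).indicator (kernelK ℓ s t) u) (𝓝[>] 0)
      (𝓝 (∫ u : ℝ, ((((Real.exp u + Real.exp (-u)) ^ ℓ)⁻¹ : ℝ) : ℂ))) := by
    refine MeasureTheory.tendsto_integral_filter_of_dominated_convergence
      (fun u => Real.exp s * (2 * (1 + u ^ 2)⁻¹))
      (Eventually.of_forall fun t =>
        ((measurable_kernelK ℓ s t).indicator measurableSet_Ioc).aestronglyMeasurable) ?_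
      ((integrable_inv_one_add_sq.const_mul 2).const_mul _) ?_
    · filter_upwards [Ioc_mem_nhdsGT one_pos] with t ht
      refine Eventually.of_forall fun u => ?_
      by_cases hu : u ∈ Set.Ioc (-(π ^ 2 / t)) (π ^ 2 / t)
      · rw [Set.indicator_of_mem hu]
        exact norm_kernelK_le hℓ s ht.1 ht.2 (abs_le.mpr ⟨hu.1.le, hu.2⟩)
      · rw [Set.indicator_of_notMem hu, norm_zero]
        positivity
    · refine Eventually.of_forall fun u => (tendsto_kernelK ℓ s u).congr' ?_
      have h2 : Tendsto (fun t : ℝ => π ^ 2 / t) (𝓝[>] 0) atTop := by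
        simpa [div_eq_mul_inv] using tendsto_inv_nhdsGT_zero.const_mul_atTop
          (show (0:ℝ) < π ^ 2 by positivity)
      filter_upwards [h2.eventually_gt_atTop |u|] with t ht
      rw [Set.indicator_of_mem (Set.mem_Ioc.mpr ⟨(abs_lt.mp ht).1, (abs_lt.mp ht).2.le⟩)]
  refine key.congr' ?_
  filter_upwards [self_mem_nhdsWithin] with t ht
  have ht : 0 < t := ht
  have : 0 < π ^ 2 / t := by positivity
  rw [intervalIntegral.integral_of_le (by linarith),
    MeasureTheory.integral_indicator measurableSet_Ioc]

/-- The powers of `t` and exponentials from `integral_mid` and from the normalisation of `stmt0`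
combine into those normalising `(q;q)_∞ ^ (ℓ² + ℓ)`. -/
theorem elementary_factor {t : ℝ} (ht : 0 < t) (ℓ : ℕ) :
    √(t / (2 * π)) ^ ℓ * Real.exp (π ^ 2 / (2 * t)) ^ ℓ * (t / (2 * π ^ 2)) *
      ((t / (2 * π)) ^ ((ℓ : ℝ) ^ 2 / 2 - 1) *
        Real.exp (π ^ 2 * ((ℓ : ℝ) ^ 2 - 2 * ℓ) / (6 * t))) =
      (√(t / (2 * π)) * Real.exp (π ^ 2 / (6 * t))) ^ (ℓ ^ 2 + ℓ) / π := by
  have hr : 0 < t / (2 * π) := by positivity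
  have hpi := pi_pos
  have e1 : √(t / (2 * π)) ^ ℓ * (t / (2 * π)) * (t / (2 * π)) ^ ((ℓ : ℝ) ^ 2 / 2 - 1) =
      √(t / (2 * π)) ^ (ℓ ^ 2 + ℓ) := by
    rw [Real.sqrt_eq_rpow, ← Real.rpow_natCast _ ℓ, ← Real.rpow_natCast _ (ℓ ^ 2 + ℓ), ← Real.rpow_mul hr.le,
      ← Real.rpow_mul hr.le, ← Real.rpow_add_one hr.ne', ← Real.rpow_add hr]
    congr 1
    push_cast
    ring
  have e2 : Real.exp (π ^ 2 / (2 * t)) ^ ℓ *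
      Real.exp (π ^ 2 * ((ℓ : ℝ) ^ 2 - 2 * ℓ) / (6 * t)) =
      Real.exp (π ^ 2 / (6 * t)) ^ (ℓ ^ 2 + ℓ) := by
    rw [← Real.exp_nat_mul, ← Real.exp_nat_mul, ← Real.exp_add]
    congr 1
    push_cast
    field_simp
    ring
  rw [mul_pow, ← e1, ← e2]
  field_simp

/-! ### Conclusion -/

/-- As `t → 0⁺`, `F_{ℓ,s}(e^{-t}) ∼ 𝒞_ℓ (t/(2π))^{1-ℓ²/2} e^{-π²(ℓ²-2ℓ)/(6t)}`. -/
theorem stmt0 (ℓ s : ℕ) (hℓ : 3 ≤ ℓ) (y : ℝ → ℝ)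
    (hy : ∀ t : ℝ, 0 < t → 0 < y t ∧ y t < t / (2 * π)) :
    Tendsto (fun t : ℝ =>
        Fls ℓ s (Complex.exp (-(t : ℂ))) (y t) *
          ((t / (2 * π)) ^ ((ℓ : ℝ) ^ 2 / 2 - 1) *
            Real.exp (π ^ 2 * ((ℓ : ℝ) ^ 2 - 2 * ℓ) / (6 * t)) : ℝ))
      (𝓝[>] (0 : ℝ)) (𝓝 ((Cconst ℓ : ℝ) : ℂ)) := by
  have hlim := (tendsto_eulerE_zero.pow (ℓ ^ 2 + ℓ)).mul
    ((tendsto_integral_kernelK (by omega : 2 ≤ ℓ) s).div_const (π : ℂ))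
  rw [one_pow, one_mul, ← Complex.ofReal_div, Cconst_eq (by omega : 0 < ℓ)] at hlim
  refine hlim.congr' ?_
  filter_upwards [self_mem_nhdsWithin] with t ht
  have ht : 0 < t := ht
  rw [Fls_eq ht hℓ, integral_kernelG ht ℓ s (hy t ht).1 (hy t ht).2, integral_mid ht]
  have h := congrArg (Complex.ofReal) (elementary_factor ht ℓ)
  simp only [Complex.ofReal_mul _ _, Complex.ofReal_div _ _, Complex.ofReal_pow] at h ⊢
  linear_combination (-(eulerE t ^ (ℓ ^ 2 + ℓ) *
    ∫ u in (-(π ^ 2 / t))..(π ^ 2 / t), kernelK ℓ s t u)) * h
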